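/- Let a > 0. Then Θ₀ < α(a,m) ≤ Θ₀ + C/√m for some constant C > 0 and all m sufficiently large; in particular lim_{m→∞} α(a,m) = Θ₀. -/

import Mathlib

open MeasureTheory Set Filter Topology

noncomputable section

/-- `B¹(ℝ₊)`-type regularity on the half line (smooth core):
`u`, `u'` and `t·u` are square integrable on `(0,∞)`. -/
def MemB1p (u : ℝ → ℝ) : Prop :=
  Differentiable ℝ u ∧
  IntegrableOn (fun t => (u t)^2) (Ioi 0) ∧
  IntegrableOn (fun t => (deriv u t)^2) (Ioi 0) ∧
  IntegrableOn (fun t => t^2 * (u t)^2) (Ioi 0)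

/-- The Robin quadratic form `q[γ,ξ]` of `-d²/dt² + (t-ξ)²` on `ℝ₊`. -/
def qRobin (γ ξ : ℝ) (u : ℝ → ℝ) : ℝ :=
  (∫ t in Ioi (0:ℝ), ((deriv u t)^2 + (t - ξ)^2 * (u t)^2)) + γ * (u 0)^2

/-- squared `L²(ℝ₊)` norm. -/
def np (u : ℝ → ℝ) : ℝ := ∫ t in Ioi (0:ℝ), (u t)^2

/-- Lowest Robin eigenvalue `λ₁(γ,ξ)`, defined variationally. -/
def lambda1 (γ ξ : ℝ) : ℝ :=
  sInf {r : ℝ | ∃ u : ℝ → ℝ, MemB1p u ∧ np u ≠ 0 ∧ r = qRobin γ ξ u / np u}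

/-- Lowest Neumann eigenvalue `λ₁^N(ξ)` (Robin with `γ = 0`). -/
def lambda1N (ξ : ℝ) : ℝ := lambda1 0 ξ

/-- Lowest Dirichlet eigenvalue `λ₁^D(ξ)`, defined variationally. -/
def lambda1D (ξ : ℝ) : ℝ :=
  sInf {r : ℝ | ∃ u : ℝ → ℝ, MemB1p u ∧ u 0 = 0 ∧ np u ≠ 0 ∧ r = qRobin 0 ξ u / np u}

/-- The de Gennes constant `Θ₀ = inf_ξ λ₁^N(ξ)`. -/
def Theta0 : ℝ := sInf (Set.range lambda1N)

/-- `B¹(ℝ)`-type regularity on the whole line (smooth core). -/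
def MemB1 (u : ℝ → ℝ) : Prop :=
  Differentiable ℝ u ∧
  Integrable (fun t => (u t)^2) ∧
  Integrable (fun t => (deriv u t)^2) ∧
  Integrable (fun t => t^2 * (u t)^2)

/-- The interface quadratic form `Q[a,m,α;ξ]` on `B¹(ℝ)`. -/
def QI (a m α ξ : ℝ) (u : ℝ → ℝ) : ℝ :=
  (∫ t in Ioi (0:ℝ), ((deriv u t)^2 + (t - ξ)^2 * (u t)^2 - α * (u t)^2)) +
  ∫ t in Iio (0:ℝ), ((1/m) * ((deriv u t)^2 + (t - ξ)^2 * (u t)^2) + a * α * (u t)^2)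

/-- squared `L²(ℝ)` norm. -/
def nR (u : ℝ → ℝ) : ℝ := ∫ t, (u t)^2

/-- Ground state energy `μ₁(a,m,α;ξ)` of the interface operator, defined variationally. -/
def mu1 (a m α ξ : ℝ) : ℝ :=
  sInf {r : ℝ | ∃ u : ℝ → ℝ, MemB1 u ∧ nR u ≠ 0 ∧ r = QI a m α ξ u / nR u}

/-- The critical value `α(a,m)` (the unique `α > 0` with `inf_ξ μ₁(a,m,α;ξ) = 0`). -/
def alphaF (a m : ℝ) : ℝ :=
  sInf {α : ℝ | 0 < α ∧ sInf (Set.range (mu1 a m α)) = 0}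

/-!
The identity `∫ (W u²)' = -W(0) u(0)²` on the half line turns the form `u'² + (t - ξ)² u²` with a
Robin term `-W(0) u(0)²` into `(u' + W u)² + ((t - ξ)² + W' - W²) u²`. A constant `W` gives a trace
inequality; a truncation of `W = t - ξ` shows that for a large Robin parameter, or for large `|ξ|`,
the energy is almost `1`. Gaussians show `Θ₀ < 1`, so by convexity every positive Robin parameter
raises the energy strictly above `Θ₀`.

If `α ≤ Θ₀`, the left half line controls `u(0)²` and thus acts on the right one as a positive Robin
term, so `inf_ξ μ₁ > 0`: this is `Θ₀ < α(a, m)`. For the upper bound, continue a Neumann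
near-minimizer to the left by a Gaussian of width `1 / √m`, corrected to match the slope at `0` at
arbitrarily small cost. The left part of the form is then `O(1 / √m)`, and nonnegativity of the form
gives `α ≤ Θ₀ + C / √m`. Finally `inf_ξ μ₁` is Lipschitz in `α`, positive at `Θ₀` and negative for
large `α`, so it has a zero and `α(a, m)` is the infimum of a nonempty set.
-/

/-- The infimum over a parameter `i` of the infima of the Rayleigh quotients `Q i u / N u`, taken
over the admissible `u` with `N u ≠ 0`; both `Theta0` and `inf_ξ μ₁` are of this form. -/
def rayleighInf {ι X : Type*} (P : X → Prop) (N : X → ℝ) (Q : ι → X → ℝ) : ℝ :=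
  sInf (range fun i => sInf {r : ℝ | ∃ u, P u ∧ N u ≠ 0 ∧ r = Q i u / N u})

theorem isGreatest_rayleighInf {ι X : Type*} [Nonempty ι] {P : X → Prop} {N : X → ℝ} {Q : ι → X → ℝ}
    (hN : ∀ u, 0 ≤ N u) (hP : ∃ u, P u ∧ N u ≠ 0)
    (hQ : {c : ℝ | ∀ i u, P u → c * N u ≤ Q i u}.Nonempty) :
    IsGreatest {c : ℝ | ∀ i u, P u → c * N u ≤ Q i u} (rayleighInf P N Q) := by
  obtain ⟨c₀, hc₀⟩ := hQ
  obtain ⟨u₀, hu₀, hNu₀⟩ := hP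
  have hpos {u} (hNu : N u ≠ 0) : 0 < N u := (hN u).lt_of_ne' hNu
  have hglb (i : ι) : IsGLB {r : ℝ | ∃ u, P u ∧ N u ≠ 0 ∧ r = Q i u / N u}
      (sInf {r : ℝ | ∃ u, P u ∧ N u ≠ 0 ∧ r = Q i u / N u}) := by
    refine isGLB_csInf ⟨_, u₀, hu₀, hNu₀, rfl⟩ ⟨c₀, ?_⟩
    rintro _ ⟨u, hu, hNu, rfl⟩
    exact (le_div_iff₀ (hpos hNu)).2 (hc₀ i u hu)
  have hlower : lowerBounds (range fun i => sInf {r : ℝ | ∃ u, P u ∧ N u ≠ 0 ∧ r = Q i u / N u}) =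
      {c : ℝ | ∀ i u, P u → c * N u ≤ Q i u} := by
    ext c
    simp only [mem_lowerBounds, forall_mem_range, le_isGLB_iff (hglb _), mem_ofPred_eq]
    refine forall_congr' fun i => ⟨fun hc u hu => ?_, ?_⟩
    · by_cases hNu : N u = 0
      · simpa [hNu] using hc₀ i u hu
      · exact (le_div_iff₀ (hpos hNu)).1 (hc _ ⟨u, hu, hNu, rfl⟩)
    · rintro hc _ ⟨u, hu, hNu, rfl⟩
      exact (le_div_iff₀ (hpos hNu)).2 (hc u hu)
  rw [← hlower]
  exact isGLB_csInf (range_nonempty _) ⟨c₀, hlower ▸ hc₀⟩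

/-! ### The quadratic form on the half line -/

variable {u v W : ℝ → ℝ} {ξ : ℝ}

theorem np_nonneg (u : ℝ → ℝ) : 0 ≤ np u := integral_nonneg fun _ => sq_nonneg _

theorem qRobin_eq_add (γ ξ : ℝ) (u : ℝ → ℝ) : qRobin γ ξ u = qRobin 0 ξ u + γ * u 0 ^ 2 := by
  simp [qRobin]

theorem qRobin_zero_nonneg (ξ : ℝ) (u : ℝ → ℝ) : 0 ≤ qRobin 0 ξ u := by
  rw [qRobin, zero_mul, add_zero]
  exact integral_nonneg fun t => by positivity

theorem qRobin_mono {β γ : ℝ} (h : β ≤ γ) (ξ : ℝ) (u : ℝ → ℝ) : qRobin β ξ u ≤ qRobin γ ξ u := by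
  unfold qRobin
  gcongr

theorem MemB1p.congr (hu : MemB1p u) (hv : Differentiable ℝ v) (h : EqOn u v (Ioi 0)) :
    MemB1p v := by
  have h' := h.deriv isOpen_Ioi
  refine ⟨hv, hu.2.1.congr_fun (fun t ht => ?_) measurableSet_Ioi,
    hu.2.2.1.congr_fun (fun t ht => ?_) measurableSet_Ioi,
    hu.2.2.2.congr_fun (fun t ht => ?_) measurableSet_Ioi⟩
  · simp only [h ht]
  · simp only [h' ht]
  · simp only [h ht]

theorem np_congr (h : EqOn u v (Ioi 0)) : np u = np v :=
  setIntegral_congr_fun measurableSet_Ioi fun t ht => by simp only [h ht]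

theorem qRobin_zero_congr (ξ : ℝ) (h : EqOn u v (Ioi 0)) : qRobin 0 ξ u = qRobin 0 ξ v := by
  simp only [qRobin, zero_mul, add_zero]
  exact setIntegral_congr_fun measurableSet_Ioi fun t ht => by
    simp only [h ht, h.deriv isOpen_Ioi ht]

theorem MemB1p.integrableOn_mul_sq_of_le_linear (hu : MemB1p u) (hW : Measurable W) {A B : ℝ}
    (hAB : ∀ t, |W t| ≤ A + B * |t|) : IntegrableOn (fun t => W t ^ 2 * u t ^ 2) (Ioi 0) := by
  obtain ⟨hd, h0, -, h2⟩ := hu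
  have hum : Measurable u := hd.continuous.measurable
  refine ((h0.const_mul (2 * A ^ 2)).add (h2.const_mul (2 * B ^ 2))).mono' (by fun_prop)
    (ae_of_all _ fun t => ?_)
  have hWt : W t ^ 2 ≤ 2 * A ^ 2 + 2 * B ^ 2 * t ^ 2 := calc
    W t ^ 2 ≤ (A + B * |t|) ^ 2 := sq_le_sq' (neg_le_of_abs_le (hAB t)) (le_of_abs_le (hAB t))
    _ ≤ 2 * (A ^ 2 + (B * |t|) ^ 2) := add_sq_le
    _ = 2 * A ^ 2 + 2 * B ^ 2 * t ^ 2 := by rw [mul_pow, sq_abs]; ring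
  rw [Real.norm_of_nonneg (by positivity), Pi.add_apply]
  linear_combination mul_le_mul_of_nonneg_right hWt (sq_nonneg (u t))

theorem MemB1p.integrableOn_qRobin (hu : MemB1p u) (ξ : ℝ) :
    IntegrableOn (fun t => deriv u t ^ 2 + (t - ξ) ^ 2 * u t ^ 2) (Ioi 0) := by
  refine hu.2.2.1.add (hu.integrableOn_mul_sq_of_le_linear (A := |ξ|) (B := 1) (by fun_prop) ?_)
  intro t
  linear_combination abs_sub t ξ

theorem MemB1p.add (hu : MemB1p u) (hv : MemB1p v) : MemB1p (fun t => u t + v t) := by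
  obtain ⟨hu, hu0, hu1, hu2⟩ := hu
  obtain ⟨hv, hv0, hv1, hv2⟩ := hv
  have hum : Measurable u := hu.continuous.measurable
  have hvm : Measurable v := hv.continuous.measurable
  refine ⟨hu.add hv, ((hu0.add hv0).const_mul 2).mono' (by fun_prop) (ae_of_all _ fun t => ?_),
    ((hu1.add hv1).const_mul 2).mono' (by fun_prop) (ae_of_all _ fun t => ?_),
    ((hu2.add hv2).const_mul 2).mono' (by fun_prop) (ae_of_all _ fun t => ?_)⟩
  · rw [Real.norm_of_nonneg (by positivity)]
    exact add_sq_le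
  · rw [Real.norm_of_nonneg (by positivity), deriv_fun_add (hu t) (hv t)]
    exact add_sq_le
  · rw [Real.norm_of_nonneg (by positivity)]
    simp only [Pi.add_apply]
    linear_combination mul_le_mul_of_nonneg_left (add_sq_le (a := u t) (b := v t)) (sq_nonneg t)

theorem np_add_le (hu : MemB1p u) (hv : MemB1p v) :
    np (fun t => u t + v t) ≤ 2 * (np u + np v) := by
  unfold np
  rw [← integral_add hu.2.1 hv.2.1, ← integral_const_mul]
  exact integral_mono (hu.add hv).2.1 ((hu.2.1.add hv.2.1).const_mul 2) fun t => add_sq_le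

theorem qRobin_zero_add_le (hu : MemB1p u) (hv : MemB1p v) (ξ : ℝ) :
    qRobin 0 ξ (fun t => u t + v t) ≤ 2 * (qRobin 0 ξ u + qRobin 0 ξ v) := by
  have hui := hu.integrableOn_qRobin ξ
  have hvi := hv.integrableOn_qRobin ξ
  simp only [qRobin, zero_mul, add_zero]
  rw [← integral_add hui hvi, ← integral_const_mul]
  refine integral_mono ((hu.add hv).integrableOn_qRobin ξ) ((hui.add hvi).const_mul 2) fun t => ?_
  simp only [deriv_fun_add (hu.1 t) (hv.1 t)]
  linear_combination add_sq_le (a := deriv u t) (b := deriv v t) +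
    mul_le_mul_of_nonneg_left (add_sq_le (a := u t) (b := v t)) (sq_nonneg (t - ξ))

theorem MemB1p.const_mul (hu : MemB1p u) (c : ℝ) : MemB1p (fun t => c * u t) := by
  obtain ⟨hd, h0, h1, h2⟩ := hu
  refine ⟨hd.const_mul c, ?_, ?_, ?_⟩
  · simp only [mul_pow]
    exact h0.const_mul (c ^ 2)
  · simp only [deriv_const_mul_field, mul_pow]
    exact h1.const_mul (c ^ 2)
  · simp only [mul_pow, mul_left_comm _ (c ^ 2)]
    exact h2.const_mul (c ^ 2)

theorem np_const_mul (c : ℝ) (u : ℝ → ℝ) : np (fun t => c * u t) = c ^ 2 * np u := by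
  simp only [np, mul_pow, integral_const_mul]

theorem qRobin_const_mul (γ ξ c : ℝ) (u : ℝ → ℝ) :
    qRobin γ ξ (fun t => c * u t) = c ^ 2 * qRobin γ ξ u := by
  simp only [qRobin, deriv_const_mul_field, mul_add, ← integral_const_mul]
  congr 1
  · congr 1 with t
    ring
  · ring

theorem deriv_comp_const_mul (L : ℝ) (u : ℝ → ℝ) (t : ℝ) :
    deriv (fun s => u (L * s)) t = L * deriv u (L * t) := by
  rw [deriv_comp_mul_left, smul_eq_mul]

theorem MemB1p.comp_const_mul (hu : MemB1p u) {L : ℝ} (hL : 0 < L) :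
    MemB1p (fun t => u (L * t)) := by
  obtain ⟨hd, h0, h1, h2⟩ := hu
  have hcomp {f : ℝ → ℝ} (hf : IntegrableOn f (Ioi 0)) :
      IntegrableOn (fun t => f (L * t)) (Ioi 0) :=
    (integrableOn_Ioi_comp_mul_left_iff f 0 hL).2 (by rwa [mul_zero])
  refine ⟨hd.comp (differentiable_id.const_mul L), hcomp h0, ?_, ?_⟩
  · simp only [deriv_comp_const_mul, mul_pow]
    exact (hcomp h1).const_mul (L ^ 2)
  · refine ((hcomp h2).const_mul (L⁻¹ ^ 2)).congr (ae_of_all _ fun t => ?_)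
    field_simp

theorem np_comp_const_mul (u : ℝ → ℝ) {L : ℝ} (hL : 0 < L) :
    np (fun t => u (L * t)) = np u / L := by
  unfold np
  rw [integral_comp_mul_left_Ioi (fun s => u s ^ 2) 0 hL, mul_zero, smul_eq_mul]
  ring

theorem qRobin_zero_comp_const_mul_le (hu : MemB1p u) {L : ℝ} (hL : 1 ≤ L) (ξ : ℝ) :
    qRobin 0 ξ (fun t => u (L * t)) ≤ 2 * L * (qRobin 0 0 u + ξ ^ 2 * np u) := by
  have hL0 : 0 < L := by linarith
  set f : ℝ → ℝ := fun s => deriv u s ^ 2 + (s - 0) ^ 2 * u s ^ 2 + ξ ^ 2 * u s ^ 2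
  have hf : IntegrableOn f (Ioi 0) := (hu.integrableOn_qRobin 0).add (hu.2.1.const_mul (ξ ^ 2))
  have hfL : IntegrableOn (fun t => f (L * t)) (Ioi 0) :=
    (integrableOn_Ioi_comp_mul_left_iff f 0 hL0).2 (by rwa [mul_zero])
  have hint : ∫ t in Ioi (0 : ℝ), f (L * t) = L⁻¹ * (qRobin 0 0 u + ξ ^ 2 * np u) := by
    rw [integral_comp_mul_left_Ioi f 0 hL0, mul_zero, smul_eq_mul,
      integral_add (hu.integrableOn_qRobin 0) (hu.2.1.const_mul (ξ ^ 2)), integral_const_mul]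
    simp only [qRobin, np, zero_mul, add_zero]
  have hle (t : ℝ) : deriv (fun s => u (L * s)) t ^ 2 + (t - ξ) ^ 2 * u (L * t) ^ 2 ≤
      2 * L ^ 2 * f (L * t) := by
    have hpot : (t - ξ) ^ 2 ≤ 2 * L ^ 2 * ((L * t - 0) ^ 2 + ξ ^ 2) := by
      have hL2 : 1 ≤ L ^ 2 := one_le_pow₀ hL
      have hLt : t ^ 2 ≤ L ^ 2 * (L * t) ^ 2 := by
        nlinarith [mul_le_mul_of_nonneg_right (one_le_pow₀ hL : 1 ≤ L ^ 4) (sq_nonneg t)]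
      linear_combination sq_nonneg (t + ξ) + 2 * hLt +
        2 * mul_le_mul_of_nonneg_right hL2 (sq_nonneg ξ)
    rw [deriv_comp_const_mul]
    linear_combination mul_le_mul_of_nonneg_right hpot (sq_nonneg (u (L * t))) +
      mul_nonneg (sq_nonneg L) (sq_nonneg (deriv u (L * t)))
  calc qRobin 0 ξ (fun t => u (L * t))
      = ∫ t in Ioi (0 : ℝ), (deriv (fun s => u (L * s)) t ^ 2 + (t - ξ) ^ 2 * u (L * t) ^ 2) := by
        simp only [qRobin, zero_mul, add_zero]
    _ ≤ ∫ t in Ioi (0 : ℝ), 2 * L ^ 2 * f (L * t) :=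
        integral_mono ((hu.comp_const_mul hL0).integrableOn_qRobin ξ) (hfL.const_mul _) hle
    _ = 2 * L * (qRobin 0 0 u + ξ ^ 2 * np u) := by
        rw [integral_const_mul, hint]
        field_simp

/-! ### Completing the square -/

section Weight

variable {B c k : ℝ}

theorem abs_le_abs_zero_add_of_abs_deriv_le (hW : Differentiable ℝ W)
    (hB : ∀ t, |deriv W t| ≤ B) (t : ℝ) : |W t| ≤ |W 0| + B * |t| := by
  have h := convex_univ.norm_image_sub_le_of_norm_deriv_le (fun s _ => hW s) (fun s _ => hB s)
    (mem_univ 0) (mem_univ t)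
  rw [sub_zero, Real.norm_eq_abs, Real.norm_eq_abs] at h
  linear_combination abs_sub_abs_le_abs_sub (W t) (W 0) + h

theorem hasDerivAt_mul_sq {t : ℝ} (hW : DifferentiableAt ℝ W t) (hu : DifferentiableAt ℝ u t) :
    HasDerivAt (fun s => W s * u s ^ 2)
      (deriv W t * u t ^ 2 + W t * (2 * u t * deriv u t)) t :=
  (hW.hasDerivAt.mul (hu.hasDerivAt.pow 2)).congr_deriv (by simp)

theorem integrableOn_deriv_mul_sq (hu : MemB1p u) (hW : Differentiable ℝ W)
    (hB : ∀ t, |deriv W t| ≤ B) :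
    IntegrableOn (fun t => deriv W t * u t ^ 2 + W t * (2 * u t * deriv u t)) (Ioi 0) := by
  have hum : Measurable u := hu.1.continuous.measurable
  have hWm : Measurable W := hW.continuous.measurable
  have hWu := hu.integrableOn_mul_sq_of_le_linear hWm (abs_le_abs_zero_add_of_abs_deriv_le hW hB)
  refine (((hu.2.1.const_mul B).add hWu).add hu.2.2.1).mono' (by fun_prop)
    (ae_of_all _ fun t => ?_)
  have hderiv : |deriv W t * u t ^ 2| ≤ B * u t ^ 2 := by
    rw [abs_mul, abs_of_nonneg (sq_nonneg (u t))]
    exact mul_le_mul_of_nonneg_right (hB t) (sq_nonneg _)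
  have hcross : |W t * (2 * u t * deriv u t)| ≤ W t ^ 2 * u t ^ 2 + deriv u t ^ 2 :=
    abs_le.2 ⟨by linear_combination sq_nonneg (W t * u t + deriv u t),
      by linear_combination sq_nonneg (W t * u t - deriv u t)⟩
  simp only [Real.norm_eq_abs, Pi.add_apply]
  linear_combination abs_add_le (deriv W t * u t ^ 2) (W t * (2 * u t * deriv u t)) +
    hderiv + hcross

theorem integral_deriv_mul_sq (hu : MemB1p u) (hW : Differentiable ℝ W)
    (hB : ∀ t, |deriv W t| ≤ B) :
    ∫ t in Ioi (0 : ℝ), (deriv W t * u t ^ 2 + W t * (2 * u t * deriv u t)) =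
      -(W 0 * u 0 ^ 2) := by
  have hum : Measurable u := hu.1.continuous.measurable
  have hWm : Measurable W := hW.continuous.measurable
  have hWu := hu.integrableOn_mul_sq_of_le_linear hWm (abs_le_abs_zero_add_of_abs_deriv_le hW hB)
  have hint : IntegrableOn (fun t => W t * u t ^ 2) (Ioi 0) := by
    refine (hu.2.1.add hWu).mono' (by fun_prop) (ae_of_all _ fun t => ?_)
    have hWt : |W t| ≤ 1 + W t ^ 2 := by
      rw [← sq_abs (W t)]
      nlinarith [sq_nonneg (|W t| - 1)]
    rw [Real.norm_eq_abs, abs_mul, abs_of_nonneg (sq_nonneg (u t)), Pi.add_apply]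
    linear_combination mul_le_mul_of_nonneg_right hWt (sq_nonneg (u t))
  have hd (t : ℝ) (_ : t ∈ Ici (0 : ℝ)) := hasDerivAt_mul_sq (hW t) (hu.1 t)
  have hi := integrableOn_deriv_mul_sq hu hW hB
  rw [integral_Ioi_of_hasDerivAt_of_tendsto' hd hi
    (tendsto_zero_of_hasDerivAt_of_integrableOn_Ioi (fun t ht => hd t (Ioi_subset_Ici_self ht))
      hi hint), zero_sub]

theorem qRobin_neg_eq_integral (hu : MemB1p u) (hW : Differentiable ℝ W)
    (hB : ∀ t, |deriv W t| ≤ B) (ξ : ℝ) :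
    qRobin (-W 0) ξ u = ∫ t in Ioi (0 : ℝ),
      ((deriv u t + W t * u t) ^ 2 + ((t - ξ) ^ 2 + deriv W t - W t ^ 2) * u t ^ 2) := by
  rw [qRobin, neg_mul, ← integral_deriv_mul_sq hu hW hB,
    ← integral_add (hu.integrableOn_qRobin ξ) (integrableOn_deriv_mul_sq hu hW hB)]
  congr 1 with t
  ring

theorem mul_np_le_qRobin_neg (hu : MemB1p u) (hW : Differentiable ℝ W)
    (hB : ∀ t, |deriv W t| ≤ B) (hc : ∀ t, c ≤ (t - ξ) ^ 2 + deriv W t - W t ^ 2) :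
    c * np u ≤ qRobin (-W 0) ξ u := by
  rw [qRobin_neg_eq_integral hu hW hB, np, ← integral_const_mul]
  refine integral_mono (hu.2.1.const_mul c) (((hu.integrableOn_qRobin ξ).add
    (integrableOn_deriv_mul_sq hu hW hB)).congr (ae_of_all _ fun t => ?_)) fun t => ?_
  · simp only [Pi.add_apply]
    ring
  linear_combination mul_le_mul_of_nonneg_right (hc t) (sq_nonneg (u t)) +
    sq_nonneg (deriv u t + W t * u t)

theorem neg_sq_mul_np_le_qRobin_neg (hu : MemB1p u) (c ξ : ℝ) :
    -c ^ 2 * np u ≤ qRobin (-c) ξ u :=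
  mul_np_le_qRobin_neg hu (W := fun _ => c) (differentiable_const c) (B := 0) (by simp)
    fun t => by
      rw [deriv_const]
      linear_combination sq_nonneg (t - ξ)

theorem qRobin_self_eq_integral (hu : MemB1p u) (ξ : ℝ) :
    qRobin ξ ξ u = ∫ t in Ioi (0 : ℝ), ((deriv u t + (t - ξ) * u t) ^ 2 + u t ^ 2) := by
  have h := qRobin_neg_eq_integral hu (W := fun t => t - ξ) (by fun_prop) (B := 1) (by simp) ξ
  simpa using h

theorem np_le_qRobin_self (hu : MemB1p u) (ξ : ℝ) : np u ≤ qRobin ξ ξ u := by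
  have h := mul_np_le_qRobin_neg hu (W := fun t => t - ξ) (ξ := ξ) (c := 1) (by fun_prop) (B := 1)
    (by simp) (by simp)
  simpa using h

theorem hasDerivAt_rational_weight {e : ℝ} (he : 0 < e) (k ξ t : ℝ) :
    HasDerivAt (fun s => k * (s - ξ) / (1 + e * (s - ξ) ^ 2))
      (k * (1 - e * (t - ξ) ^ 2) / (1 + e * (t - ξ) ^ 2) ^ 2) t := by
  have hs : HasDerivAt (fun s : ℝ => s - ξ) 1 t := (hasDerivAt_id t).sub_const ξ
  have hne : 1 + e * (t - ξ) ^ 2 ≠ 0 := by positivity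
  refine ((hs.const_mul k).fun_div (((hs.fun_pow 2).const_mul e).const_add 1) hne).congr_deriv ?_
  push_cast
  ring

-- The weight `W = k s / (1 + e s²)`, `s = t - ξ`, satisfies `W² ≤ k² s²` and `W' ≥ k (1 - 3 e s²)`.
theorem mul_np_le_qRobin_rational {e : ℝ} (he : 0 < e) (hk : 0 ≤ k) (hke : k ^ 2 + 3 * e * k ≤ 1)
    (hu : MemB1p u) (ξ : ℝ) : k * np u ≤ qRobin (k * ξ / (1 + e * ξ ^ 2)) ξ u := by
  have hderiv (t : ℝ) := (hasDerivAt_rational_weight he k ξ t).deriv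
  have hbound (t : ℝ) : |deriv (fun s => k * (s - ξ) / (1 + e * (s - ξ) ^ 2)) t| ≤ k := by
    have hx : 0 ≤ e * (t - ξ) ^ 2 := by positivity
    have hden : 0 < (1 + e * (t - ξ) ^ 2) ^ 2 := by positivity
    rw [hderiv, abs_div, abs_mul, abs_of_nonneg hk, abs_of_pos hden, div_le_iff₀ hden]
    gcongr
    exact abs_le.2 ⟨by nlinarith, by nlinarith⟩
  have hc (t : ℝ) : k ≤ (t - ξ) ^ 2 + deriv (fun s => k * (s - ξ) / (1 + e * (s - ξ) ^ 2)) t -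
      (k * (t - ξ) / (1 + e * (t - ξ) ^ 2)) ^ 2 := by
    rw [hderiv]
    generalize t - ξ = s
    have hx : 0 ≤ e * s ^ 2 := by positivity
    have hW' : k * (1 - 3 * (e * s ^ 2)) ≤ k * (1 - e * s ^ 2) / (1 + e * s ^ 2) ^ 2 := by
      rw [mul_div_assoc]
      gcongr
      rw [le_div_iff₀ (by positivity)]
      nlinarith [pow_nonneg hx 3]
    have hW : (k * s / (1 + e * s ^ 2)) ^ 2 ≤ (k * s) ^ 2 := by
      rw [div_pow]
      exact div_le_self (sq_nonneg _) (one_le_pow₀ (by linarith))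
    linear_combination hW' + hW + mul_le_mul_of_nonneg_right hke (sq_nonneg s)
  have h := mul_np_le_qRobin_neg hu
    (fun t => (hasDerivAt_rational_weight he k ξ t).differentiableAt) hbound hc
  convert h using 2
  simp [neg_div]

theorem exists_mul_np_le_qRobin_rational (hk0 : 0 ≤ k) (hk1 : k < 1) :
    ∃ e > 0, ∀ ξ u, MemB1p u → k * np u ≤ qRobin (k * ξ / (1 + e * ξ ^ 2)) ξ u :=
  ⟨(1 - k ^ 2) / 3, by nlinarith, fun ξ _ hu =>
    mul_np_le_qRobin_rational (by nlinarith) hk0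
    (by nlinarith [mul_nonneg (sq_nonneg (1 - k)) (by linarith : 0 ≤ 1 + k)]) hu ξ⟩

theorem exists_mul_np_le_qRobin (hk0 : 0 ≤ k) (hk1 : k < 1) :
    ∃ K > 0, ∀ ξ u, MemB1p u → k * np u ≤ qRobin K ξ u := by
  obtain ⟨e, he, h⟩ := exists_mul_np_le_qRobin_rational hk0 hk1
  refine ⟨1 + 1 / e, by positivity, fun ξ u hu => (h ξ u hu).trans (qRobin_mono ?_ ξ u)⟩
  rw [div_le_iff₀ (by positivity)]
  calc k * ξ ≤ 1 + ξ ^ 2 := by nlinarith [sq_nonneg (ξ - k)]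
    _ ≤ 1 + ξ ^ 2 + (1 / e + e * ξ ^ 2) := le_add_of_nonneg_right (by positivity)
    _ = (1 + 1 / e) * (1 + e * ξ ^ 2) := by
      field_simp
      ring

theorem exists_mul_np_le_qRobin_zero_of_lt_abs (hk0 : 0 ≤ k) (hk1 : k < 1) :
    ∃ R, ∀ ξ u, R < |ξ| → MemB1p u → k * np u ≤ qRobin 0 ξ u := by
  obtain ⟨e, he, h⟩ := exists_mul_np_le_qRobin_rational (k := (1 + k) / 2)
    (by linarith) (by linarith)
  set δ := (1 - k) / 4 with hδ
  have hδ0 : 0 < δ := by linarith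
  refine ⟨1 / (e * δ), fun ξ u hξ hu => ?_⟩
  have hN := np_nonneg u
  rcases le_or_gt ξ 0 with hneg | hpos
  · calc k * np u ≤ np u := mul_le_of_le_one_left hN hk1.le
      _ ≤ qRobin ξ ξ u := np_le_qRobin_self hu ξ
      _ ≤ qRobin 0 ξ u := qRobin_mono hneg ξ u
  · rw [abs_of_pos hpos, div_lt_iff₀ (by positivity)] at hξ
    have hW : (1 + k) / 2 * ξ / (1 + e * ξ ^ 2) ≤ δ := by
      rw [div_le_iff₀ (by positivity)]
      nlinarith
    have hrobin := (h ξ u hu).trans (qRobin_mono hW ξ u)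
    have htrace := neg_sq_mul_np_le_qRobin_neg hu 1 ξ
    rw [qRobin_eq_add] at hrobin htrace
    have hsum : ((1 + k) / 2 - δ) * np u ≤ (1 + δ) * qRobin 0 ξ u := by
      linear_combination hrobin + δ * htrace
    have hk : (1 + δ) * k ≤ (1 + k) / 2 - δ := by
      rw [hδ]
      nlinarith
    refine le_of_mul_le_mul_left ?_ (by linarith : 0 < 1 + δ)
    linear_combination hsum + mul_le_mul_of_nonneg_right hk hN

theorem exists_pos_mul_np_le_qRobin_zero :
    ∃ c > 0, ∀ ξ u, MemB1p u → c * np u ≤ qRobin 0 ξ u := by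
  obtain ⟨K, hK, h⟩ := exists_mul_np_le_qRobin (k := 1 / 2) (by norm_num) (by norm_num)
  refine ⟨1 / (4 * (1 + 4 * K ^ 2)), by positivity, fun ξ u hu => ?_⟩
  have hrobin := h ξ u hu
  have htrace := neg_sq_mul_np_le_qRobin_neg hu (1 / (4 * K)) ξ
  rw [qRobin_eq_add] at hrobin htrace
  have htrace' : K * u 0 ^ 2 ≤ 4 * K ^ 2 * qRobin 0 ξ u + np u / 4 := by
    have := mul_le_mul_of_nonneg_left htrace (by positivity : 0 ≤ 4 * K ^ 2)
    field_simp at this ⊢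
    linarith
  rw [one_div, inv_mul_le_iff₀ (by positivity)]
  linarith

end Weight

/-! ### The Gaussian and the de Gennes constant -/

/-- The Gaussian `exp (-t² / 2)`: a trial function for `Theta0` and, dilated, the profile of the
trial functions on the left half line. -/
def gaussian (t : ℝ) : ℝ := Real.exp (-t ^ 2 / 2)

theorem gaussian_sq (t : ℝ) : gaussian t ^ 2 = Real.exp (-t ^ 2) := by
  rw [gaussian, ← Real.exp_nat_mul]
  congr 1
  push_cast
  ring

theorem gaussian_zero : gaussian 0 = 1 := by simp [gaussian]

theorem hasDerivAt_gaussian (t : ℝ) : HasDerivAt gaussian (-t * gaussian t) t := by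
  refine ((hasDerivAt_pow 2 t).fun_neg.div_const 2).exp.congr_deriv ?_
  rw [gaussian]
  push_cast
  ring

theorem hasDerivAt_mul_gaussian (t : ℝ) :
    HasDerivAt (fun s => s * gaussian s) ((1 - t ^ 2) * gaussian t) t :=
  ((hasDerivAt_id t).mul (hasDerivAt_gaussian t)).congr_deriv (by simp only [id]; ring)

theorem integrable_pow_mul_gaussian_sq (n : ℕ) : Integrable fun t => t ^ n * gaussian t ^ 2 := by
  simpa [gaussian_sq] using integrable_rpow_mul_exp_neg_mul_sq one_pos
    (show (-1 : ℝ) < n by linarith [n.cast_nonneg (α := ℝ)])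

theorem memB1_gaussian : MemB1 gaussian := by
  have hd : deriv gaussian = fun t => -t * gaussian t :=
    funext fun t => (hasDerivAt_gaussian t).deriv
  refine ⟨fun t => (hasDerivAt_gaussian t).differentiableAt, ?_, ?_,
    integrable_pow_mul_gaussian_sq 2⟩
  · simpa using integrable_pow_mul_gaussian_sq 0
  · simpa [hd, mul_pow] using integrable_pow_mul_gaussian_sq 2

theorem memB1p_gaussian : MemB1p gaussian :=
  ⟨memB1_gaussian.1, memB1_gaussian.2.1.integrableOn, memB1_gaussian.2.2.1.integrableOn,
    memB1_gaussian.2.2.2.integrableOn⟩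

theorem memB1p_mul_gaussian : MemB1p fun t => t * gaussian t := by
  refine ⟨fun t => (hasDerivAt_mul_gaussian t).differentiableAt,
    ((integrable_pow_mul_gaussian_sq 2).congr (ae_of_all _ fun t => ?_)).integrableOn,
    ((((integrable_pow_mul_gaussian_sq 0).sub ((integrable_pow_mul_gaussian_sq 2).const_mul 2)).add
      (integrable_pow_mul_gaussian_sq 4)).congr (ae_of_all _ fun t => ?_)).integrableOn,
    ((integrable_pow_mul_gaussian_sq 4).congr (ae_of_all _ fun t => ?_)).integrableOn⟩
  · ring
  · simp only [Pi.add_apply, Pi.sub_apply, (hasDerivAt_mul_gaussian t).deriv]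
    ring
  · ring

theorem np_gaussian_pos : 0 < np gaussian := by
  refine (setIntegral_pos_iff_support_of_nonneg_ae (ae_of_all _ fun t => sq_nonneg _)
    memB1p_gaussian.2.1).2 ?_
  have hsupp : (Function.support fun t => gaussian t ^ 2) = univ :=
    eq_univ_of_forall fun t => (pow_pos (Real.exp_pos _) 2).ne'
  simp [hsupp]

theorem qRobin_zero_gaussian (ξ : ℝ) :
    qRobin 0 ξ gaussian = (1 + ξ ^ 2) * np gaussian - ξ := by
  have h := qRobin_self_eq_integral memB1p_gaussian ξ
  have hint (t : ℝ) : (deriv gaussian t + (t - ξ) * gaussian t) ^ 2 + gaussian t ^ 2 =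
      (1 + ξ ^ 2) * gaussian t ^ 2 := by
    rw [(hasDerivAt_gaussian t).deriv]
    ring
  simp only [hint, integral_const_mul] at h
  rw [qRobin_eq_add, gaussian_zero, ← np] at h
  linarith

theorem isGreatest_Theta0 :
    IsGreatest {c : ℝ | ∀ ξ u, MemB1p u → c * np u ≤ qRobin 0 ξ u} Theta0 :=
  isGreatest_rayleighInf np_nonneg ⟨gaussian, memB1p_gaussian, np_gaussian_pos.ne'⟩
    ⟨0, fun ξ u _ => by rw [zero_mul]; exact qRobin_zero_nonneg ξ u⟩

theorem Theta0_mul_np_le (hu : MemB1p u) (ξ : ℝ) : Theta0 * np u ≤ qRobin 0 ξ u :=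
  isGreatest_Theta0.1 ξ u hu

theorem Theta0_pos : 0 < Theta0 :=
  let ⟨_, hc, h⟩ := exists_pos_mul_np_le_qRobin_zero
  hc.trans_le (isGreatest_Theta0.2 h)

theorem Theta0_lt_one : Theta0 < 1 := by
  have hN := np_gaussian_pos
  have h := Theta0_mul_np_le memB1p_gaussian (1 / (2 * np gaussian))
  have hlt : qRobin 0 (1 / (2 * np gaussian)) gaussian < 1 * np gaussian := by
    have : 0 < 1 / (4 * np gaussian) := by positivity
    rw [qRobin_zero_gaussian]
    field_simp at this ⊢
    linarith
  exact lt_of_mul_lt_mul_right (h.trans_lt hlt) hN.le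

theorem exists_qRobin_zero_lt {c : ℝ} (hc : Theta0 < c) :
    ∃ ξ u, MemB1p u ∧ qRobin 0 ξ u < c * np u := by
  by_contra! h
  exact hc.not_ge (isGreatest_Theta0.2 h)

-- Near-minimizers have bounded frequency because the energy is almost `1 > Theta0` for large `|ξ|`.
theorem exists_abs_le_and_qRobin_zero_lt :
    ∃ R, ∀ c > Theta0, ∃ ξ u, |ξ| ≤ R ∧ MemB1p u ∧ 0 < np u ∧ qRobin 0 ξ u < c * np u := by
  have hΘ0 := Theta0_pos
  have hΘ1 := Theta0_lt_one
  obtain ⟨R, hR⟩ := exists_mul_np_le_qRobin_zero_of_lt_abs (k := (1 + Theta0) / 2)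
    (by linarith) (by linarith)
  refine ⟨R, fun c hc => ?_⟩
  obtain ⟨ξ, u, hu, hlt⟩ :=
    exists_qRobin_zero_lt (lt_min hc (by linarith : Theta0 < (1 + Theta0) / 2))
  have hN := np_nonneg u
  refine ⟨ξ, u, ?_, hu, ?_, hlt.trans_le (mul_le_mul_of_nonneg_right (min_le_left _ _) hN)⟩
  · by_contra! hξ
    exact (hR ξ u hξ hu).not_gt
      (hlt.trans_le (mul_le_mul_of_nonneg_right (min_le_right _ _) hN))
  · refine hN.lt_of_ne fun h0 => ?_
    rw [← h0, mul_zero] at hlt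
    exact (qRobin_zero_nonneg ξ u).not_gt hlt

-- The form `qRobin γ` is a convex combination of `qRobin 0`, bounded below by `Theta0`, and of
-- `qRobin K` with `K` large, bounded below by any prescribed number in `(Theta0, 1)`.
theorem exists_Theta0_add_mul_np_le_qRobin {γ : ℝ} (hγ : 0 < γ) :
    ∃ δ > 0, ∀ ξ u, MemB1p u → (Theta0 + δ) * np u ≤ qRobin γ ξ u := by
  have hΘ0 := Theta0_pos
  have hΘ1 := Theta0_lt_one
  obtain ⟨K, hK, h⟩ := exists_mul_np_le_qRobin (k := (1 + Theta0) / 2)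
    (by linarith) (by linarith)
  set s := min 1 (γ / K)
  have hs0 : 0 < s := lt_min one_pos (by positivity)
  have hs1 : s ≤ 1 := min_le_left _ _
  have hsK : s * K ≤ γ := (le_div_iff₀ hK).1 (min_le_right _ _)
  refine ⟨s * ((1 - Theta0) / 2), by nlinarith, fun ξ u hu => ?_⟩
  have hrobin := h ξ u hu
  have hneumann := Theta0_mul_np_le hu ξ
  have hmono := qRobin_mono hsK ξ u
  rw [qRobin_eq_add] at hrobin hmono
  linear_combination (1 - s) * hneumann + s * hrobin + hmono

/-! ### Functions on the line as pairs of functions on the half line -/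

theorem integrable_iff_integrableOn_comp_neg {f : ℝ → ℝ} :
    Integrable f ↔ IntegrableOn f (Ioi 0) ∧ IntegrableOn (fun t => f (-t)) (Ioi 0) := by
  have hneg : IntegrableOn (fun t => f (-t)) (Ioi 0) ↔ IntegrableOn f (Iic 0) := by
    have h := (Measure.measurePreserving_neg (volume : Measure ℝ)).integrableOn_comp_preimage
      (MeasurableEquiv.neg ℝ).measurableEmbedding (f := f) (s := Iio 0)
    rw [neg_preimage, neg_Iio, neg_zero] at h
    rw [integrableOn_Iic_iff_integrableOn_Iio]
    exact h
  rw [hneg, and_comm, ← integrableOn_union, Iic_union_Ioi, integrableOn_univ]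

/-- The reflection of a function on the line at the interface `0`; `MemB1p`, `np` and `qRobin`
applied to `reflect u` speak about `u` on the left half line. -/
def reflect (u : ℝ → ℝ) (t : ℝ) : ℝ := u (-t)

theorem deriv_reflect (u : ℝ → ℝ) (t : ℝ) : deriv (reflect u) t = -deriv u (-t) :=
  deriv_comp_neg u t

theorem memB1_iff : MemB1 u ↔ MemB1p u ∧ MemB1p (reflect u) := by
  have hd (h : Differentiable ℝ u) : Differentiable ℝ (reflect u) := h.comp differentiable_neg
  simp only [MemB1, MemB1p, integrable_iff_integrableOn_comp_neg, deriv_reflect, neg_sq, reflect]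
  tauto

theorem setIntegral_Iio_eq_comp_neg (f : ℝ → ℝ) :
    ∫ t in Iio (0 : ℝ), f t = ∫ t in Ioi (0 : ℝ), f (-t) := by
  rw [integral_comp_neg_Ioi, neg_zero, integral_Iic_eq_integral_Iio]

theorem nR_eq (hu : MemB1 u) : nR u = np u + np (reflect u) := by
  rw [nR, ← intervalIntegral.integral_Iic_add_Ioi (b := (0 : ℝ)) hu.2.1.integrableOn
    hu.2.1.integrableOn, integral_Iic_eq_integral_Iio, setIntegral_Iio_eq_comp_neg, add_comm]
  rfl

theorem QI_eq (hu : MemB1 u) (a m α ξ : ℝ) :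
    QI a m α ξ u = qRobin 0 ξ u - α * np u +
      ((1 / m) * qRobin 0 (-ξ) (reflect u) + a * α * np (reflect u)) := by
  obtain ⟨hr, hl⟩ := memB1_iff.1 hu
  have hleft (t : ℝ) : (1 / m) * (deriv u (-t) ^ 2 + (-t - ξ) ^ 2 * u (-t) ^ 2) +
      a * α * u (-t) ^ 2 = (1 / m) * (deriv (reflect u) t ^ 2 + (t - -ξ) ^ 2 * reflect u t ^ 2) +
      a * α * reflect u t ^ 2 := by
    rw [deriv_reflect, reflect]
    ring
  simp only [QI, setIntegral_Iio_eq_comp_neg, hleft]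
  rw [integral_sub (hr.integrableOn_qRobin ξ) (hr.2.1.const_mul α),
    integral_add ((hl.integrableOn_qRobin (-ξ)).const_mul _) (hl.2.1.const_mul _)]
  simp only [qRobin, np, integral_const_mul, zero_mul, add_zero]

/-- The function on the line equal to `u` on the right half line and to `reflect v` on the left. -/
def glue (u v : ℝ → ℝ) (t : ℝ) : ℝ := if 0 ≤ t then u t else v (-t)

theorem eqOn_glue (u v : ℝ → ℝ) : EqOn u (glue u v) (Ici 0) := fun _ ht => (if_pos ht).symm

theorem eqOn_reflect_glue (h0 : u 0 = v 0) : EqOn v (reflect (glue u v)) (Ici 0) := fun t ht => by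
  rcases (mem_Ici.1 ht).eq_or_lt with rfl | ht
  · simp [reflect, glue, h0]
  · simp [reflect, glue, ht.not_ge]

theorem differentiable_glue (hu : Differentiable ℝ u) (hv : Differentiable ℝ v) (h0 : u 0 = v 0)
    (h1 : deriv u 0 = -deriv v 0) : Differentiable ℝ (glue u v) := by
  have hr : EqOn (glue u v) u (Ici 0) := (eqOn_glue u v).symm
  have hl : EqOn (glue u v) (reflect v) (Iic 0) := fun t ht => by
    simpa [reflect] using (eqOn_reflect_glue h0 (mem_Ici.2 (neg_nonneg.2 ht))).symm
  have hv' : Differentiable ℝ (reflect v) := hv.comp differentiable_neg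
  intro t
  rcases lt_trichotomy t 0 with ht | rfl | ht
  · exact (hv' t).congr_of_eventuallyEq (hl.eventuallyEq_of_mem (Iic_mem_nhds ht))
  · have hright := (hu 0).hasDerivAt.hasDerivWithinAt.congr hr (hr self_mem_Ici)
    have hleft := (hv' 0).hasDerivAt.hasDerivWithinAt.congr hl (hl self_mem_Iic)
    rw [deriv_reflect, neg_zero, ← h1] at hleft
    have h := hleft.union hright
    rw [Iic_union_Ici, hasDerivWithinAt_univ] at h
    exact h.differentiableAt
  · exact (hu t).congr_of_eventuallyEq (hr.eventuallyEq_of_mem (Ici_mem_nhds ht))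

theorem memB1_glue (hu : MemB1p u) (hv : MemB1p v) (h0 : u 0 = v 0)
    (h1 : deriv u 0 = -deriv v 0) : MemB1 (glue u v) := by
  have hd := differentiable_glue hu.1 hv.1 h0 h1
  exact memB1_iff.2 ⟨hu.congr hd ((eqOn_glue u v).mono Ioi_subset_Ici_self),
    hv.congr (hd.comp differentiable_neg) ((eqOn_reflect_glue h0).mono Ioi_subset_Ici_self)⟩

/-! ### Trial functions for the interface problem -/

-- Dilating `t * gaussian t` by `L` and dividing by `L` keeps the slope at `0` and makes the energy
-- of order `1 / L`: the derivative at the interface can be corrected at arbitrarily small cost.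
theorem exists_deriv_eq_and_qRobin_zero_le (D ξ : ℝ) {ε : ℝ} (hε : 0 < ε) :
    ∃ z, MemB1p z ∧ z 0 = 0 ∧ deriv z 0 = D ∧ np z ≤ ε ∧ qRobin 0 ξ z ≤ ε := by
  set ψ : ℝ → ℝ := fun t => t * gaussian t
  have hψ : MemB1p ψ := memB1p_mul_gaussian
  have hN := np_nonneg ψ
  set C := qRobin 0 0 ψ + ξ ^ 2 * np ψ
  have hC : 0 ≤ C := add_nonneg (qRobin_zero_nonneg 0 ψ) (by positivity)
  set L := 1 + (D ^ 2 * np ψ + 2 * D ^ 2 * C) / ε with hL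
  have hL1 : 1 ≤ L := le_add_of_nonneg_right (by positivity)
  have hL0 : 0 < L := by linarith
  have hLε : D ^ 2 * np ψ + 2 * D ^ 2 * C ≤ L * ε := by
    rw [hL, add_mul, div_mul_cancel₀ _ hε.ne']
    linarith
  have hψL := hψ.comp_const_mul hL0
  refine ⟨fun t => D / L * ψ (L * t), hψL.const_mul _, by simp [ψ], ?_, ?_, ?_⟩
  · have hψ0 : deriv ψ (L * 0) = 1 := by
      rw [(hasDerivAt_mul_gaussian _).deriv, mul_zero, gaussian_zero]
      norm_num
    rw [deriv_const_mul_field, deriv_comp_const_mul, hψ0]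
    field_simp
  · calc np (fun t => D / L * ψ (L * t)) = D ^ 2 * np ψ / L ^ 3 := by
          rw [np_const_mul, np_comp_const_mul ψ hL0]
          field_simp
      _ ≤ D ^ 2 * np ψ / L := by
          gcongr
          exact le_self_pow₀ hL1 three_ne_zero
      _ ≤ ε := by
          rw [div_le_iff₀' hL0]
          exact le_of_add_le_of_nonneg_left hLε (by positivity)
  · calc qRobin 0 ξ (fun t => D / L * ψ (L * t)) ≤ (D / L) ^ 2 * (2 * L * C) := by
          rw [qRobin_const_mul]
          gcongr
          exact qRobin_zero_comp_const_mul_le hψ hL1 ξ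
      _ = 2 * D ^ 2 * C / L := by field_simp
      _ ≤ ε := by
          rw [div_le_iff₀' hL0]
          exact le_of_add_le_of_nonneg_right hLε (by positivity)

theorem exists_memB1p_with_jet (R : ℝ) :
    ∃ C > 0, ∀ ξ, |ξ| ≤ R → ∀ κ, 1 ≤ κ → ∀ A D ε, 0 < ε → ∃ v, MemB1p v ∧ v 0 = A ∧
      deriv v 0 = D ∧ np v ≤ C * A ^ 2 / κ + ε ∧ qRobin 0 ξ v ≤ C * A ^ 2 * κ + ε := by
  have hN := np_gaussian_pos
  have hq := qRobin_zero_nonneg 0 gaussian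
  refine ⟨2 * np gaussian + 4 * (qRobin 0 0 gaussian + R ^ 2 * np gaussian), by positivity,
    fun ξ hξ κ hκ A D ε hε => ?_⟩
  have hκ0 : 0 < κ := by linarith
  have hgκ := memB1p_gaussian.comp_const_mul hκ0
  have hg := hgκ.const_mul A
  obtain ⟨z, hz, hz0, hz1, hzN, hzq⟩ := exists_deriv_eq_and_qRobin_zero_le D ξ (half_pos hε)
  refine ⟨fun t => A * gaussian (κ * t) + z t, hg.add hz, by simp [hz0, gaussian_zero], ?_, ?_, ?_⟩
  · rw [deriv_fun_add (hg.1 0) (hz.1 0), deriv_const_mul_field, deriv_comp_const_mul,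
      (hasDerivAt_gaussian _).deriv, hz1]
    ring
  · calc np (fun t => A * gaussian (κ * t) + z t) ≤ 2 * (A ^ 2 * (np gaussian / κ) + ε / 2) := by
          refine (np_add_le hg hz).trans ?_
          rw [np_const_mul, np_comp_const_mul gaussian hκ0]
          gcongr
      _ = 2 * np gaussian * A ^ 2 / κ + ε := by ring
      _ ≤ _ := by
          gcongr
          exact le_add_of_nonneg_right (by positivity)
  · have hξR : ξ ^ 2 ≤ R ^ 2 := sq_le_sq' (neg_le_of_abs_le hξ) (le_of_abs_le hξ)
    calc qRobin 0 ξ (fun t => A * gaussian (κ * t) + z t)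
        ≤ 2 * (A ^ 2 * (2 * κ * (qRobin 0 0 gaussian + R ^ 2 * np gaussian)) + ε / 2) := by
          refine (qRobin_zero_add_le hg hz ξ).trans ?_
          rw [qRobin_const_mul]
          gcongr
          refine (qRobin_zero_comp_const_mul_le memB1p_gaussian hκ ξ).trans ?_
          gcongr
      _ = 4 * (qRobin 0 0 gaussian + R ^ 2 * np gaussian) * A ^ 2 * κ + ε := by ring
      _ ≤ _ := by
          gcongr
          exact le_add_of_nonneg_left (by positivity)

theorem exists_memB1_trial_function :
    ∃ C > 0, ∀ κ, 1 ≤ κ → ∃ ξ w, MemB1 w ∧ 0 < np w ∧ qRobin 0 ξ w ≤ (Theta0 + 1 / κ) * np w ∧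
      np (reflect w) ≤ C / κ * np w ∧ qRobin 0 (-ξ) (reflect w) ≤ C * κ * np w := by
  obtain ⟨R, hR⟩ := exists_abs_le_and_qRobin_zero_lt
  obtain ⟨C, hC, htail⟩ := exists_memB1p_with_jet R
  refine ⟨3 * C + 1, by positivity, fun κ hκ => ?_⟩
  have hκ0 : 0 < κ := by linarith
  have hκ' : 1 / κ ≤ 1 := (div_le_one₀ hκ0).2 hκ
  obtain ⟨ξ, u, hξ, hu, hN, hq⟩ := hR (Theta0 + 1 / κ) (lt_add_of_pos_right _ (by positivity))
  obtain ⟨v, hv, hv0, hv1, hvN, hvq⟩ := htail (-ξ) (by rwa [abs_neg]) κ hκ (u 0) (-deriv u 0)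
    (np u / κ) (by positivity)
  have htrace : u 0 ^ 2 ≤ 3 * np u := by
    have h := neg_sq_mul_np_le_qRobin_neg hu 1 ξ
    rw [qRobin_eq_add] at h
    have hΘ : (Theta0 + 1 / κ) * np u ≤ 2 * np u := by
      gcongr
      linarith [Theta0_lt_one]
    linarith
  have hw := memB1_glue hu hv hv0.symm (by rw [hv1, neg_neg])
  have hright := (eqOn_glue u v).mono Ioi_subset_Ici_self
  have hleft := (eqOn_reflect_glue hv0.symm).mono Ioi_subset_Ici_self
  refine ⟨ξ, glue u v, hw, ?_⟩
  rw [← np_congr hright, ← np_congr hleft, ← qRobin_zero_congr ξ hright,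
    ← qRobin_zero_congr (-ξ) hleft]
  refine ⟨hN, hq.le, ?_, ?_⟩
  · calc np v ≤ C * (3 * np u) / κ + np u / κ := hvN.trans (by gcongr)
      _ = (3 * C + 1) / κ * np u := by ring
  · calc qRobin 0 (-ξ) v ≤ C * (3 * np u) * κ + np u * κ := by
          refine hvq.trans ?_
          gcongr
          exact (div_le_self hN.le hκ).trans (le_mul_of_one_le_right hN.le hκ)
      _ = (3 * C + 1) * κ * np u := by ring

/-! ### The critical value -/

/-- The infimum over `ξ` of the ground state energies `μ₁(a, m, α; ξ)`. -/
def interfaceEnergy (a m α : ℝ) : ℝ := sInf (range (mu1 a m α))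

section Interface

variable {a m α : ℝ}

theorem nR_nonneg (u : ℝ → ℝ) : 0 ≤ nR u := integral_nonneg fun _ => sq_nonneg _

theorem nR_gaussian_pos : 0 < nR gaussian := by
  rw [nR_eq memB1_gaussian]
  exact add_pos_of_pos_of_nonneg np_gaussian_pos (np_nonneg _)

theorem QI_le_QI_add (hu : MemB1 u) (a m α β ξ : ℝ) :
    QI a m α ξ u ≤ QI a m β ξ u + (1 + |a|) * |α - β| * nR u := by
  have hN := np_nonneg u
  have hN' := np_nonneg (reflect u)
  have hright : -(α - β) * np u ≤ |α - β| * np u :=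
    mul_le_mul_of_nonneg_right (neg_le_abs _) hN
  have hleft : a * (α - β) * np (reflect u) ≤ |a| * |α - β| * np (reflect u) := by
    rw [← abs_mul]
    exact mul_le_mul_of_nonneg_right (le_abs_self _) hN'
  have hrest : 0 ≤ |a| * |α - β| * np u + |α - β| * np (reflect u) := by positivity
  rw [QI_eq hu, QI_eq hu, nR_eq hu]
  linear_combination hright + hleft + hrest

theorem QI_zero_nonneg (hm : 0 < m) (hu : MemB1 u) (a ξ : ℝ) : 0 ≤ QI a m 0 ξ u := by
  have hq := qRobin_zero_nonneg ξ u
  have hq' := qRobin_zero_nonneg (-ξ) (reflect u)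
  rw [QI_eq hu, zero_mul, mul_zero, zero_mul, sub_zero, add_zero]
  positivity

theorem isGreatest_interfaceEnergy (hm : 0 < m) (a α : ℝ) :
    IsGreatest {c : ℝ | ∀ ξ u, MemB1 u → c * nR u ≤ QI a m α ξ u} (interfaceEnergy a m α) := by
  refine isGreatest_rayleighInf nR_nonneg ⟨gaussian, memB1_gaussian, nR_gaussian_pos.ne'⟩
    ⟨-((1 + |a|) * |0 - α|), fun ξ u hu => ?_⟩
  linear_combination QI_zero_nonneg hm hu a ξ + QI_le_QI_add hu a m 0 α ξ

theorem continuous_interfaceEnergy (hm : 0 < m) (a : ℝ) : Continuous (interfaceEnergy a m) := by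
  refine (LipschitzWith.of_le_add_mul (1 + ‖a‖₊) fun α β => ?_).continuous
  rw [← sub_le_iff_le_add]
  refine (isGreatest_interfaceEnergy hm a β).2 fun ξ u hu => ?_
  push_cast
  rw [Real.dist_eq, Real.norm_eq_abs]
  linear_combination (isGreatest_interfaceEnergy hm a α).1 ξ u hu + QI_le_QI_add hu a m α β ξ

theorem interfaceEnergy_pos (ha : 0 < a) (hm : 0 < m) (hα : 0 < α) (hαΘ : α ≤ Theta0) :
    0 < interfaceEnergy a m α := by
  set γ := min (1 / m) (a * α / 2)
  have hγ : 0 < γ := by positivity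
  obtain ⟨δ, hδ, hrobin⟩ := exists_Theta0_add_mul_np_le_qRobin hγ
  have hc : 0 < min δ (a * α / 2) := by positivity
  refine hc.trans_le ((isGreatest_interfaceEnergy hm a α).2 fun ξ u hu => ?_)
  obtain ⟨hr, hl⟩ := memB1_iff.1 hu
  have hN := np_nonneg u
  have hN' := np_nonneg (reflect u)
  have hright : (Theta0 + δ) * np u ≤ qRobin 0 ξ u + γ * u 0 ^ 2 := by
    rw [← qRobin_eq_add]
    exact hrobin ξ u hr
  have hleft : γ * u 0 ^ 2 ≤ 1 / m * qRobin 0 (-ξ) (reflect u) +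
      a * α / 2 * np (reflect u) := by
    have htrace := neg_sq_mul_np_le_qRobin_neg hl 1 (-ξ)
    rw [qRobin_eq_add, reflect, neg_zero] at htrace
    calc γ * u 0 ^ 2 ≤ γ * (qRobin 0 (-ξ) (reflect u) + np (reflect u)) := by
          gcongr
          linarith
      _ = γ * qRobin 0 (-ξ) (reflect u) + γ * np (reflect u) := mul_add _ _ _
      _ ≤ _ := add_le_add
          (mul_le_mul_of_nonneg_right (min_le_left _ _) (qRobin_zero_nonneg _ _))
          (mul_le_mul_of_nonneg_right (min_le_right _ _) hN')
  rw [QI_eq hu, nR_eq hu]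
  linear_combination hright + hleft + mul_le_mul_of_nonneg_right hαΘ hN +
    mul_le_mul_of_nonneg_right (min_le_left δ (a * α / 2)) hN +
    mul_le_mul_of_nonneg_right (min_le_right δ (a * α / 2)) hN'

theorem exists_le_Theta0_add_mul_div_sqrt (ha : 0 < a) :
    ∃ C > 0, ∀ m ≥ 1, ∀ α > 0, 0 ≤ interfaceEnergy a m α → α ≤ Theta0 + C * (1 + α) / √m := by
  obtain ⟨C, hC, htrial⟩ := exists_memB1_trial_function
  refine ⟨1 + C + a * C, by positivity, fun m hm α hα hE => ?_⟩
  have hm0 : 0 < m := by linarith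
  have hκ : 1 ≤ √m := Real.one_le_sqrt.2 hm
  obtain ⟨ξ, w, hw, hN, hright, hleftN, hleftq⟩ := htrial √m hκ
  have hQ : 0 ≤ QI a m α ξ w :=
    (mul_nonneg hE (nR_nonneg w)).trans ((isGreatest_interfaceEnergy hm0 a α).1 ξ w hw)
  have hleftq' : 1 / m * qRobin 0 (-ξ) (reflect w) ≤ C / √m * np w := by
    calc 1 / m * qRobin 0 (-ξ) (reflect w) ≤ 1 / m * (C * √m * np w) := by gcongr
      _ = C / √m * np w := by
        nth_rw 1 [← Real.sq_sqrt hm0.le]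
        field_simp
  have hbound : α * np w ≤ (Theta0 + (1 + C + a * C * α) / √m) * np w := by
    rw [QI_eq hw] at hQ
    linear_combination hQ + hright + hleftq' + a * α * hleftN
  refine (le_of_mul_le_mul_right hbound hN).trans ?_
  gcongr
  nlinarith [mul_pos ha hC]

theorem exists_le_Theta0_add_div_sqrt (ha : 0 < a) :
    ∃ C > 0, ∃ M > 0, ∀ m ≥ M, ∀ α > 0, 0 ≤ interfaceEnergy a m α → α ≤ Theta0 + C / √m := by
  have hΘ := Theta0_pos
  obtain ⟨C, hC, h⟩ := exists_le_Theta0_add_mul_div_sqrt ha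
  refine ⟨C * (2 + 2 * Theta0), by positivity, 1 + (2 * C) ^ 2, by positivity,
    fun m hm α hα hE => ?_⟩
  have hm1 : 1 ≤ m := by linarith [sq_nonneg (2 * C)]
  have hκ : 2 * C ≤ √m := Real.le_sqrt_of_sq_le (by linarith)
  have hκ0 : 0 < √m := Real.sqrt_pos.2 (by linarith)
  have hα' := h m hm1 α hα hE
  have hhalf : C * (1 + α) / √m ≤ (1 + α) / 2 := by
    rw [div_le_div_iff₀ hκ0 two_pos]
    linear_combination mul_le_mul_of_nonneg_right hκ (by positivity : 0 ≤ 1 + α)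
  have hα2 : 1 + α ≤ 2 + 2 * Theta0 := by linarith
  exact hα'.trans (by gcongr)

theorem exists_interfaceEnergy_eq_zero (ha : 0 < a) (hm : 0 < m) {B : ℝ}
    (hB : ∀ α > 0, 0 ≤ interfaceEnergy a m α → α ≤ B) :
    ∃ α, 0 < α ∧ interfaceEnergy a m α = 0 := by
  have hΘ := Theta0_pos
  have hleft : 0 < interfaceEnergy a m Theta0 := interfaceEnergy_pos ha hm hΘ le_rfl
  have hΘB : Theta0 ≤ B := hB Theta0 hΘ hleft.le
  have hright : interfaceEnergy a m (B + 1) < 0 := by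
    by_contra! h
    linarith [hB (B + 1) (by linarith) h]
  obtain ⟨α, hα, hα0⟩ := intermediate_value_Icc' (by linarith : Theta0 ≤ B + 1)
    (continuous_interfaceEnergy hm a).continuousOn ⟨hright.le, hleft.le⟩
  exact ⟨α, hΘ.trans_le hα.1, hα0⟩

theorem alphaF_mem_Icc {A B : ℝ} (hne : ∃ α, 0 < α ∧ interfaceEnergy a m α = 0)
    (hA : ∀ α > 0, interfaceEnergy a m α = 0 → A ≤ α)
    (hB : ∀ α > 0, interfaceEnergy a m α = 0 → α ≤ B) : alphaF a m ∈ Icc A B := by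
  have hlower : A ∈ lowerBounds {α | 0 < α ∧ interfaceEnergy a m α = 0} :=
    fun α hα => hA α hα.1 hα.2
  obtain ⟨α, hα⟩ := hne
  exact ⟨le_csInf ⟨α, hα⟩ hlower, (csInf_le ⟨A, hlower⟩ hα).trans (hB α hα.1 hα.2)⟩

end Interface

/-- there is `C > 0` such that `Θ₀ < α(a,m) ≤ Θ₀ + C/√m` for all
large `m`; in particular `α(a,m) → Θ₀` as `m → ∞`. -/
theorem alpha_limit_m_to_infty (a : ℝ) (ha : 0 < a) :
    (∃ C : ℝ, 0 < C ∧ ∃ M : ℝ, ∀ m : ℝ, M ≤ m → ∀ α : ℝ,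
      0 < α → sInf (Set.range (mu1 a m α)) = 0 →
      Theta0 < α ∧ α ≤ Theta0 + C / Real.sqrt m) ∧
    Tendsto (fun m => alphaF a m) atTop (𝓝 Theta0) := by
  obtain ⟨C, hC, M, hM, hupper⟩ := exists_le_Theta0_add_div_sqrt ha
  have hbounds (m : ℝ) (hm : M ≤ m) (α : ℝ) (hα : 0 < α) (hE : interfaceEnergy a m α = 0) :
      Theta0 < α ∧ α ≤ Theta0 + C / √m :=
    ⟨not_le.1 fun hαΘ => (interfaceEnergy_pos ha (hM.trans_le hm) hα hαΘ).ne' hE,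
      hupper m hm α hα hE.ge⟩
  have halpha : ∀ᶠ m in atTop, alphaF a m ∈ Icc Theta0 (Theta0 + C / √m) := by
    filter_upwards [eventually_ge_atTop M] with m hm
    exact alphaF_mem_Icc (exists_interfaceEnergy_eq_zero ha (hM.trans_le hm) (hupper m hm))
      (fun α hα hE => (hbounds m hm α hα hE).1.le) fun α hα hE => (hbounds m hm α hα hE).2
  have hlim : Tendsto (fun m => Theta0 + C / √m) atTop (𝓝 Theta0) := by
    simpa using (tendsto_const_nhds.div_atTop Real.tendsto_sqrt_atTop).const_add Theta0
  exact ⟨⟨C, hC, M, hbounds⟩, tendsto_of_tendsto_of_tendsto_of_le_of_le' tendsto_const_nhds hlim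
    (halpha.mono fun _ => And.left) (halpha.mono fun _ => And.right)⟩
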